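/- arXiv:math/0308201 — 8 statements merged into one kernel-verified Lean document; each statement's English description precedes it below -/
import Mathlib

section
/- Let Φ be a finite reduced irreducible root system with base Π and positive roots Φ⁺, and let Π_L be a proper subset of Π. Put Φ_L⁺ = Φ⁺ ∩ span(Π_L) and γ = (1/2)·Σ_{α ∈ Φ⁺ \ Φ_L⁺} α^∨. Then ⟨β, γ⟩ = 0 for every β ∈ Π_L, and ⟨λ, γ⟩ > 0 for every nonzero dominant vector λ in the span of Φ. -/
open Classical

/-!
The proof replaces the Weyl-invariant inner product by the map `T y = ∑_{α ∈ Φ} y(α) α` from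
`V*` to `V`. Reindexing the sum `∑_α β^∨(α) α` along the reflection `s_β` shows that it equals
`k_β β` with `k_β = ½ ∑_α β^∨(α)² > 0` (`two_smul_sum_coroot`), so `β^∨(T y) = k_β y(β)`.
The range of `T` contains every root: a functional `f` killing the range satisfies
`∑_α f(α)² = f(T f) = 0`. Hence each `lam` in the span of `Φ` is `T y` for some `y`, and
`⟨lam, γ⟩ = ½ y(v)` with `v = ∑_{α ∈ Φ⁺ \ Φ_L⁺} k_α α`. In particular
(`lam = β = T (β^∨ / k_β)`) `k_β α^∨(β) = k_α β^∨(α)`.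

For `β ∈ Δ_L` the reflection `s_β` permutes `Φ⁺ \ Φ_L⁺`, because it does not change the
coordinates off `Δ_L`; since `(s_β α)^∨ = α^∨ ∘ s_β` on the span, `⟨β, γ⟩ = -⟨β, γ⟩`.

For positivity, all simple-root coordinates of `v` are nonnegative, and those off `Δ_L` are
positive. Let `s` be the set of simple roots at which the coordinate of `v` vanishes, so
`s ⊆ Δ_L`. For `β ∈ s` the first part gives `β^∨(v) = 0`, a sum of terms `v_δ β^∨(δ) ≤ 0`
over `δ ∉ s`; hence `β^∨(δ) = 0 = δ^∨(β)` there, and irreducibility forces `s = ∅`. So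
`v = ∑ v_δ δ` with every `v_δ > 0`. If `lam = T y` is dominant, then `y(δ) ≥ 0` for all simple
`δ`, with some `y(δ) > 0` unless `lam = 0`; therefore `y(v) > 0`.
-/

section Reflections

variable {V : Type*} [AddCommGroup V] [Module ℝ V] {Φ : Finset V} {coroot : V → Module.Dual ℝ V}

lemma coroot_reflect_self (hpair2 : ∀ α ∈ Φ, coroot α α = 2) {β : V} (hβ : β ∈ Φ) (x : V) :
    coroot β (x - coroot β x • β) = - coroot β x := by
  rw [map_sub, map_smul, hpair2 β hβ, smul_eq_mul]
  ring

lemma reflect_reflect (hpair2 : ∀ α ∈ Φ, coroot α α = 2) {β : V} (hβ : β ∈ Φ) (x : V) :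
    (x - coroot β x • β) - coroot β (x - coroot β x • β) • β = x := by
  rw [coroot_reflect_self hpair2 hβ]
  module

/-- A sum over a set of vectors stable under `s_β` may be reindexed along `s_β`. -/
lemma sum_reflect {M : Type*} [AddCommMonoid M] (hpair2 : ∀ α ∈ Φ, coroot α α = 2)
    {β : V} (hβ : β ∈ Φ) (S : Finset V) (hS : ∀ α ∈ S, α - coroot β α • β ∈ S) (F : V → M) :
    ∑ α ∈ S, F (α - coroot β α • β) = ∑ α ∈ S, F α :=
  Finset.sum_bij' (fun α _ => α - coroot β α • β) (fun α _ => α - coroot β α • β) hS hS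
    (fun α _ => reflect_reflect hpair2 hβ α) (fun α _ => reflect_reflect hpair2 hβ α)
    (fun _ _ => rfl)

/-- The vector `∑_α β^∨(α) α` is negated by `s_β`, hence is a multiple of `β`. -/
lemma two_smul_sum_coroot (hpair2 : ∀ α ∈ Φ, coroot α α = 2)
    (hrefl : ∀ α ∈ Φ, ∀ β ∈ Φ, β - (coroot α β) • α ∈ Φ) {β : V} (hβ : β ∈ Φ) :
    (2 : ℝ) • ∑ α ∈ Φ, coroot β α • α = (∑ α ∈ Φ, coroot β α ^ 2) • β := by
  have h := sum_reflect hpair2 hβ Φ (hrefl β hβ) (fun α => coroot β α • α)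
  simp only [coroot_reflect_self hpair2 hβ] at h
  rw [two_smul]
  nth_rewrite 1 [← h]
  rw [← Finset.sum_add_distrib, Finset.sum_smul]
  refine Finset.sum_congr rfl fun α _ => ?_
  module

/-- `k_β = ½ ∑_α β^∨(α)²`, the constant with `∑_α β^∨(α) α = k_β β`. -/
noncomputable def corootScale (Φ : Finset V) (coroot : V → Module.Dual ℝ V) (β : V) : ℝ :=
  (1 / 2) * ∑ α ∈ Φ, coroot β α ^ 2

lemma corootScale_pos (hpair2 : ∀ α ∈ Φ, coroot α α = 2) {β : V} (hβ : β ∈ Φ) :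
    0 < corootScale Φ coroot β := by
  refine mul_pos (by norm_num) (Finset.sum_pos' (fun _ _ => sq_nonneg _) ⟨β, hβ, ?_⟩)
  rw [hpair2 β hβ]
  norm_num

lemma coroot_sum_smul (hpair2 : ∀ α ∈ Φ, coroot α α = 2)
    (hrefl : ∀ α ∈ Φ, ∀ β ∈ Φ, β - (coroot α β) • α ∈ Φ) {β : V} (hβ : β ∈ Φ)
    (y : Module.Dual ℝ V) :
    coroot β (∑ α ∈ Φ, y α • α) = corootScale Φ coroot β * y β := by
  have h := congrArg y (two_smul_sum_coroot hpair2 hrefl hβ)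
  simp only [map_smul, map_sum, smul_eq_mul] at h ⊢
  rw [corootScale, mul_assoc, ← h, ← mul_assoc]
  norm_num
  exact Finset.sum_congr rfl fun α _ => mul_comm _ _

/-- Every vector in the span of `Φ` has the form `∑_α y(α) α`. -/
lemma exists_eq_sum_smul {x : V} (hx : x ∈ Submodule.span ℝ (Φ : Set V)) :
    ∃ y : Module.Dual ℝ V, x = ∑ α ∈ Φ, y α • α := by
  let T : Module.Dual ℝ V →ₗ[ℝ] V :=
    ∑ α ∈ Φ, (Module.Dual.eval ℝ V α).smulRight α
  have hT : ∀ y, T y = ∑ α ∈ Φ, y α • α := fun y => by simp [T]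
  suffices h : Submodule.span ℝ (Φ : Set V) ≤ LinearMap.range T by
    obtain ⟨y, hy⟩ := h hx
    exact ⟨y, by rw [← hT, hy]⟩
  refine Submodule.span_le.2 fun β hβ => ?_
  by_contra hcon
  obtain ⟨f, hfβ, hf⟩ := Submodule.exists_le_ker_of_notMem hcon
  have h0 : f (T f) = 0 := hf ⟨f, rfl⟩
  rw [hT, map_sum] at h0
  simp only [map_smul, smul_eq_mul] at h0
  have := (Finset.sum_eq_zero_iff_of_nonneg (fun α _ => mul_self_nonneg (f α))).1 h0 β hβ
  exact hfβ (mul_self_eq_zero.1 this)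

lemma corootScale_mul_comm (hpair2 : ∀ α ∈ Φ, coroot α α = 2)
    (hrefl : ∀ α ∈ Φ, ∀ β ∈ Φ, β - (coroot α β) • α ∈ Φ) {α β : V} (hα : α ∈ Φ) (hβ : β ∈ Φ) :
    corootScale Φ coroot β * coroot α β = corootScale Φ coroot α * coroot β α := by
  rw [← coroot_sum_smul hpair2 hrefl hα (coroot β), ← smul_eq_mul, ← map_smul]
  congr 1
  rw [corootScale, mul_smul, ← two_smul_sum_coroot hpair2 hrefl hβ, smul_smul]
  norm_num

/-- `(s_β α)^∨ = α^∨ ∘ s_β` on the roots, by uniqueness of the coroot. -/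
lemma coroot_reflect (hpair2 : ∀ α ∈ Φ, coroot α α = 2)
    (hrefl : ∀ α ∈ Φ, ∀ β ∈ Φ, β - (coroot α β) • α ∈ Φ) {α β x : V} (hα : α ∈ Φ) (hβ : β ∈ Φ)
    (hx : x ∈ Φ) :
    coroot (α - coroot β α • β) x = coroot α (x - coroot β x • β) := by
  have hγ := hrefl β hβ α hα
  let f : Module.Dual ℝ V := coroot α - coroot α β • coroot β
  have hf : ∀ z, f z = coroot α (z - coroot β z • β) := fun z => by
    simp [f, mul_comm]
  have hf2 : f (α - coroot β α • β) = 2 := by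
    rw [hf, reflect_reflect hpair2 hβ, hpair2 α hα]
  have hmaps : Set.MapsTo (Module.preReflection (α - coroot β α • β) f) (Φ : Set V) Φ := by
    intro z hz
    have h := hrefl β hβ _ (hrefl α hα _ (hrefl β hβ z hz))
    -- this is `s_β s_α s_β z`
    have e : Module.preReflection (α - coroot β α • β) f z =
        (z - coroot β z • β - coroot α (z - coroot β z • β) • α) -
          coroot β (z - coroot β z • β - coroot α (z - coroot β z • β) • α) • β := by
      rw [Module.preReflection_apply, hf, map_sub (coroot β), coroot_reflect_self hpair2 hβ,
        map_smul, smul_eq_mul]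
      module
    rw [e]
    exact h
  have hmaps' : Set.MapsTo (Module.preReflection (α - coroot β α • β)
      (coroot (α - coroot β α • β))) (Φ : Set V) Φ :=
    fun z hz => hrefl _ hγ z hz
  have := Module.Dual.eq_of_preReflection_mapsTo' (R := ℝ) (Φ := (Φ : Set V)) Φ.finite_toSet
    (Submodule.subset_span hγ) (hpair2 _ hγ) hmaps' hf2 hmaps
  have h2 := LinearMap.congr_fun this ⟨x, Submodule.subset_span hx⟩
  rw [← hf]
  exact h2

end Reflections


/-- Let `Φ` be a finite reduced irreducible root system with base `Δ` and positive
roots `Φ⁺` (the roots which are nonnegative combinations of `Δ`), and let `ΔL ⊊ Δ`.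
With `Φ_L⁺ = Φ⁺ ∩ span ΔL` and `γ = (1/2)·Σ_{α ∈ Φ⁺ \ Φ_L⁺} α^∨`, one has
`⟨β, γ⟩ = 0` for every `β ∈ ΔL`, and `⟨lam, γ⟩ > 0` for every nonzero dominant
vector `lam` in the span of `Φ`. -/
theorem stmt_2 (V : Type*) [AddCommGroup V] [Module ℝ V] [FiniteDimensional ℝ V]
    (Φ : Finset V) (coroot : V → Module.Dual ℝ V)
    -- root system axioms
    (h0 : (0 : V) ∉ Φ)
    (hpair2 : ∀ α ∈ Φ, coroot α α = 2)
    (hint : ∀ α ∈ Φ, ∀ β ∈ Φ, ∃ n : ℤ, coroot α β = (n : ℝ))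
    (hrefl : ∀ α ∈ Φ, ∀ β ∈ Φ, β - (coroot α β) • α ∈ Φ)
    (hred : ∀ α ∈ Φ, ∀ c : ℝ, c • α ∈ Φ → c = 1 ∨ c = -1)
    -- `Δ` is a base of `Φ`
    (Δ : Finset V) (hΔΦ : Δ ⊆ Φ)
    (hind : LinearIndependent ℝ (fun α : Δ => (α : V)))
    (hbase : ∀ β ∈ Φ, ∃ c : Δ → ℤ, ((∀ α, 0 ≤ c α) ∨ (∀ α, c α ≤ 0)) ∧
        (β : V) = ∑ α : Δ, (c α : ℝ) • (α : V))
    -- irreducibility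
    (hirr : ∀ s : Finset V, s ⊆ Δ →
        (∀ α ∈ s, ∀ β ∈ Δ, β ∉ s → coroot β α = 0 ∧ coroot α β = 0) → s = ∅ ∨ s = Δ)
    -- `ΔL` is a proper subset of `Δ`
    (ΔL : Finset V) (hL : ΔL ⊆ Δ) (hLproper : ΔL ≠ Δ) :
    (∀ β ∈ ΔL,
      ((1 / 2 : ℝ) • ∑ α ∈ Φ.filter (fun β' =>
          (∃ c : Δ → ℝ, (∀ α', 0 ≤ c α') ∧ β' = ∑ α' : Δ, c α' • (α' : V)) ∧
          β' ∉ Submodule.span ℝ (ΔL : Set V)), coroot α) β = 0) ∧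
    (∀ lam : V, lam ∈ Submodule.span ℝ (Φ : Set V) →
      (∀ α ∈ Δ, 0 ≤ coroot α lam) → lam ≠ 0 →
      0 < ((1 / 2 : ℝ) • ∑ α ∈ Φ.filter (fun β' =>
          (∃ c : Δ → ℝ, (∀ α', 0 ≤ c α') ∧ β' = ∑ α' : Δ, c α' • (α' : V)) ∧
          β' ∉ Submodule.span ℝ (ΔL : Set V)), coroot α) lam) := by
  set S := Φ.filter (fun β' =>
          (∃ c : Δ → ℝ, (∀ α', 0 ≤ c α') ∧ β' = ∑ α' : Δ, c α' • (α' : V)) ∧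
          β' ∉ Submodule.span ℝ (ΔL : Set V)) with hSdef
  -- `g` extends the coordinates with respect to `Δ` to all of `V`
  obtain ⟨g, hg⟩ : ∃ g : V →ₗ[ℝ] (Δ → ℝ), ∀ c : Δ → ℝ, g (∑ α : Δ, c α • (α : V)) = c := by
    obtain ⟨g, hg⟩ := LinearMap.exists_leftInverse_of_injective
      (Fintype.linearCombination ℝ (fun α : Δ => (α : V)))
      (LinearMap.ker_eq_bot.2 hind.fintypeLinearCombination_injective)
    exact ⟨g, fun c => by
      simpa [Fintype.linearCombination_apply] using LinearMap.congr_fun hg c⟩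
  have hgsimple : ∀ δ : Δ, g (δ : V) = Pi.single δ 1 := by
    intro δ
    rw [← hg (Pi.single δ 1)]
    congr 1
    simp [Pi.single_apply, ite_smul]
  have hexp : ∀ x ∈ Φ, x = ∑ δ : Δ, g x δ • (δ : V) := by
    intro x hx
    obtain ⟨c, -, hc⟩ := hbase x hx
    conv_rhs => rw [hc, hg]
    exact hc
  have hsign : ∀ x ∈ Φ, (∀ δ, 0 ≤ g x δ) ∨ (∀ δ, g x δ ≤ 0) := by
    intro x hx
    obtain ⟨c, hc1, hc⟩ := hbase x hx
    have : g x = fun δ => (c δ : ℝ) := by rw [hc, hg]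
    rw [this]
    rcases hc1 with h | h
    · exact Or.inl fun δ => Int.cast_nonneg (h δ)
    · exact Or.inr fun δ => Int.cast_nonpos.2 (h δ)
  have hspan0 : ∀ x ∈ Submodule.span ℝ (ΔL : Set V), ∀ δ : Δ, (δ : V) ∉ ΔL → g x δ = 0 := by
    intro x hx δ hδ
    have hle : Submodule.span ℝ (ΔL : Set V) ≤ LinearMap.ker (LinearMap.proj δ ∘ₗ g) := by
      refine Submodule.span_le.2 fun β hβ => ?_
      have h1 := hgsimple ⟨β, hL hβ⟩
      have hne : δ ≠ ⟨β, hL hβ⟩ := fun h => hδ (by rw [h]; exact hβ)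
      simp only [SetLike.mem_coe, LinearMap.mem_ker, LinearMap.comp_apply, LinearMap.proj_apply]
      simp only at h1
      rw [h1, Pi.single_eq_of_ne hne]
    exact hle hx
  have hmemS : ∀ x, x ∈ S ↔ x ∈ Φ ∧ (∀ δ, 0 ≤ g x δ) ∧ ∃ δ : Δ, (δ : V) ∉ ΔL ∧ g x δ ≠ 0 := by
    intro x
    rw [hSdef, Finset.mem_filter]
    refine and_congr_right fun hx => and_congr ⟨?_, fun h => ⟨g x, h, hexp x hx⟩⟩ ?_
    · rintro ⟨c, hc, rfl⟩
      rwa [hg]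
    · constructor
      · intro h
        by_contra! hcon
        apply h
        rw [hexp x hx]
        refine Submodule.sum_mem _ fun δ _ => ?_
        by_cases hδ : (δ : V) ∈ ΔL
        · exact Submodule.smul_mem _ _ (Submodule.subset_span hδ)
        · rw [hcon δ hδ, zero_smul]
          exact Submodule.zero_mem _
      · rintro ⟨δ, hδ, hne⟩ h
        exact hne (hspan0 x h δ hδ)
  have hSΦ : ∀ x ∈ S, x ∈ Φ := fun x hx => ((hmemS x).1 hx).1
  have hgrefl : ∀ (x : V) (β δ : Δ), δ ≠ β → ∀ r : ℝ, g (x - r • (β : V)) δ = g x δ := by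
    intro x β δ hne r
    rw [map_sub, map_smul, hgsimple]
    simp [hne]
  have hSrefl : ∀ β ∈ ΔL, ∀ α ∈ S, α - coroot β α • β ∈ S := by
    intro β hβ α hα
    obtain ⟨hαΦ, hpos, δ, hδ, hne⟩ := (hmemS α).1 hα
    have hδβ : δ ≠ ⟨β, hL hβ⟩ := fun h => hδ (by rw [h]; exact hβ)
    have hcoord := hgrefl α ⟨β, hL hβ⟩ δ hδβ (coroot β α)
    have hΦ' := hrefl β (hΔΦ (hL hβ)) α hαΦ
    refine (hmemS _).2 ⟨hΦ', ?_, δ, hδ, by rw [hcoord]; exact hne⟩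
    rcases hsign _ hΦ' with h | h
    · exact h
    · exact absurd (le_antisymm (hcoord ▸ h δ) (hpos δ)) hne
  have hzero : ∀ β ∈ ΔL, ∑ α ∈ S, coroot α β = 0 := by
    intro β hβ
    have hβΦ := hΔΦ (hL hβ)
    have h := sum_reflect hpair2 hβΦ S (hSrefl β hβ) (fun α => coroot α β)
    have h' : ∑ α ∈ S, coroot (α - coroot β α • β) β = ∑ α ∈ S, - coroot α β := by
      refine Finset.sum_congr rfl fun α hα => ?_
      rw [coroot_reflect hpair2 hrefl (hSΦ α hα) hβΦ hβΦ, hpair2 β hβΦ, map_sub, map_smul,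
        smul_eq_mul]
      ring
    rw [h', Finset.sum_neg_distrib] at h
    linarith
  refine ⟨fun β hβ => ?_, fun lam hlam hdom hne => ?_⟩
  · rw [LinearMap.smul_apply, LinearMap.sum_apply, hzero β hβ, smul_zero]
  set k := corootScale Φ coroot with hk
  have hkpos : ∀ α ∈ Φ, 0 < k α := fun α hα => corootScale_pos hpair2 hα
  let v : V := ∑ α ∈ S, k α • α
  have hgv : ∀ δ, g v δ = ∑ α ∈ S, k α * g α δ := fun δ => by simp [v]
  have hvexp : v = ∑ δ : Δ, g v δ • (δ : V) := by
    simp only [hgv, Finset.sum_smul]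
    rw [Finset.sum_comm]
    refine Finset.sum_congr rfl fun α hα => ?_
    simp only [mul_smul]
    rw [← Finset.smul_sum, ← hexp α (hSΦ α hα)]
  have hvterm : ∀ δ, ∀ α ∈ S, 0 ≤ k α * g α δ := fun δ α hα =>
    mul_nonneg (hkpos α (hSΦ α hα)).le (((hmemS α).1 hα).2.1 δ)
  have hvnonneg : ∀ δ, 0 ≤ g v δ := fun δ => by
    rw [hgv]
    exact Finset.sum_nonneg (hvterm δ)
  have hvoff : ∀ δ : Δ, (δ : V) ∉ ΔL → 0 < g v δ := by
    intro δ hδ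
    have hself : g (δ : V) δ = 1 := by rw [hgsimple, Pi.single_eq_same]
    have hδS : (δ : V) ∈ S := by
      refine (hmemS _).2 ⟨hΔΦ δ.2, fun ε => ?_, δ, hδ, by rw [hself]; exact one_ne_zero⟩
      rw [hgsimple, Pi.single_apply]
      split_ifs <;> norm_num
    rw [hgv]
    refine Finset.sum_pos' (hvterm δ) ⟨δ, hδS, ?_⟩
    rw [hself, mul_one]
    exact hkpos _ (hΔΦ δ.2)
  have hobtuse : ∀ β δ : Δ, δ ≠ β → coroot (β : V) (δ : V) ≤ 0 := by
    intro β δ hne'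
    have hΦ' := hrefl β (hΔΦ β.2) δ (hΔΦ δ.2)
    have h1 : g ((δ : V) - coroot (β : V) δ • (β : V)) δ = 1 := by
      rw [hgrefl _ _ _ hne', hgsimple, Pi.single_eq_same]
    have h2 : g ((δ : V) - coroot (β : V) δ • (β : V)) β = - coroot (β : V) δ := by
      rw [map_sub, map_smul, hgsimple, hgsimple]
      simp [hne'.symm]
    rcases hsign _ hΦ' with h | h
    · have := h β
      rw [h2] at this
      linarith
    · have := h δ
      rw [h1] at this
      linarith
  have hcorv : ∀ β ∈ ΔL, coroot β v = 0 := by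
    intro β hβ
    have hβΦ := hΔΦ (hL hβ)
    have : coroot β v = ∑ α ∈ S, k β * coroot α β := by
      simp only [v, map_sum, map_smul, smul_eq_mul]
      exact Finset.sum_congr rfl fun α hα =>
        (corootScale_mul_comm hpair2 hrefl (hSΦ α hα) hβΦ).symm
    rw [this, ← Finset.mul_sum, hzero β hβ, mul_zero]
  have hvpos : ∀ δ, 0 < g v δ := by
    let s : Finset V := Δ.filter fun x => ∀ h : x ∈ Δ, g v ⟨x, h⟩ = 0
    have hs : ∀ δ : Δ, (δ : V) ∈ s ↔ g v δ = 0 := fun δ => by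
      simp [s, δ.2]
    have horth : ∀ α ∈ s, ∀ β ∈ Δ, β ∉ s → coroot β α = 0 ∧ coroot α β = 0 := by
      intro α hα β hβ hβs
      have hαΔ : α ∈ Δ := (Finset.mem_filter.1 hα).1
      have hα0 : g v ⟨α, hαΔ⟩ = 0 := (hs ⟨α, hαΔ⟩).1 hα
      have hαL : α ∈ ΔL := by
        by_contra h
        exact (hvoff ⟨α, hαΔ⟩ h).ne' hα0
      have hsum := hcorv α hαL
      rw [hvexp, map_sum] at hsum
      simp only [map_smul, smul_eq_mul] at hsum
      have hle : ∀ δ ∈ (Finset.univ : Finset Δ), g v δ * coroot α (δ : V) ≤ 0 := by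
        intro δ _
        by_cases h : δ = ⟨α, hαΔ⟩
        · rw [h, hα0, zero_mul]
        · exact mul_nonpos_of_nonneg_of_nonpos (hvnonneg δ) (hobtuse ⟨α, hαΔ⟩ δ h)
      have hz := (Finset.sum_eq_zero_iff_of_nonpos hle).1 hsum ⟨β, hβ⟩ (Finset.mem_univ _)
      have hαβ : coroot α β = 0 :=
        (mul_eq_zero.1 hz).resolve_left fun h => hβs ((hs ⟨β, hβ⟩).2 h)
      have hcomm := corootScale_mul_comm hpair2 hrefl (hΔΦ hβ) (hΔΦ hαΔ)
      rw [hαβ, mul_zero] at hcomm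
      exact ⟨(mul_eq_zero.1 hcomm).resolve_left (hkpos α (hΔΦ hαΔ)).ne', hαβ⟩
    intro δ
    refine lt_of_le_of_ne (hvnonneg δ) fun h => ?_
    rcases hirr s (Finset.filter_subset _ _) horth with hemp | hall
    · have := (hs δ).2 h.symm
      rw [hemp] at this
      exact Finset.notMem_empty _ this
    · refine hLproper (Finset.Subset.antisymm hL fun x hx => ?_)
      by_contra hxL
      exact (hvoff ⟨x, hx⟩ hxL).ne' ((hs ⟨x, hx⟩).1 (by rw [hall]; exact hx))
  obtain ⟨y, hy⟩ := exists_eq_sum_smul hlam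
  have hcy : ∀ α ∈ Φ, coroot α lam = k α * y α := fun α hα => by
    rw [hy, coroot_sum_smul hpair2 hrefl hα]
  have hyΔ : ∀ δ : Δ, 0 ≤ y (δ : V) := fun δ => by
    have h := hdom δ δ.2
    rw [hcy _ (hΔΦ δ.2)] at h
    exact nonneg_of_mul_nonneg_right h (hkpos _ (hΔΦ δ.2))
  have hex : ∃ δ : Δ, 0 < y (δ : V) := by
    by_contra! hcon
    have hy0 : ∀ δ : Δ, y (δ : V) = 0 := fun δ => le_antisymm (hcon δ) (hyΔ δ)
    apply hne
    rw [hy]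
    refine Finset.sum_eq_zero fun α hα => ?_
    rw [hexp α hα, map_sum]
    simp [hy0]
  have hval : ∑ α ∈ S, coroot α lam = ∑ δ : Δ, g v δ * y (δ : V) := by
    calc ∑ α ∈ S, coroot α lam = y v := by
          simp only [v, map_sum, map_smul, smul_eq_mul]
          exact Finset.sum_congr rfl fun α hα => hcy α (hSΦ α hα)
      _ = _ := by
          conv_lhs => rw [hvexp]
          simp only [map_sum, map_smul, smul_eq_mul]
  rw [LinearMap.smul_apply, LinearMap.sum_apply, hval, smul_eq_mul]
  obtain ⟨δ, hδ⟩ := hex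
  exact mul_pos (by norm_num) (Finset.sum_pos' (fun ε _ => mul_nonneg (hvpos ε).le (hyΔ ε))
    ⟨δ, Finset.mem_univ _, mul_pos (hvpos δ) hδ⟩)
end

section
/- Let Φ be a finite reduced root system with base Π, and let Π_L, Π_Y ⊆ Π. Assume that for every α ∈ Π_Y there is a finite sequence α = β_0, β_1, …, β_s of elements of Π_Y with ⟨β_t, β_{t+1}^∨⟩ ≠ 0 for all t and with β_s ∉ Π_L (i.e., no connected component of Π_Y is contained in Π_L). Then there exist strictly positive rational numbers (c_α)_{α∈Π_Y} such that Σ_{α∈Π_Y} c_α ⟨β, α^∨⟩ ≤ 0 for every β ∈ Π_L. -/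
/-!
For `α ∈ ΔY`, let `d α` be the least number of steps of a chain of neighbors inside `ΔY` that
leads from `α` out of `ΔL`; it is finite by the connectedness hypothesis. The weights
`c α = (1/2) ^ d α` work. Indeed, for `β ∈ ΔL` every summand with `α ≠ β` is nonpositive. If
`β ∈ ΔY`, then `d β = k + 1 > 0`, and the first step of a shortest chain is a neighbor `γ ≠ β`
with `d γ ≤ k`. As `⟨β, γ^∨⟩` is a negative integer, the summands at `β` and `γ` add up to at most
`2 c β - c γ ≤ 2 * (1/2) ^ (k + 1) - (1/2) ^ k = 0`.
-/

/-- `ExitsIn coroot L Y n a`: some chain of exactly `n` neighbor steps, each landing in `Y`, leads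
from `a` to an element outside `L`. -/
def ExitsIn {V : Type*} [AddCommGroup V] [Module ℝ V] (coroot : V → Module.Dual ℝ V)
    (L Y : Finset V) : ℕ → V → Prop
  | 0, a => a ∉ L
  | n + 1, a => ∃ b ∈ Y, coroot b a ≠ 0 ∧ ExitsIn coroot L Y n b

theorem exists_exitsIn {V : Type*} [AddCommGroup V] [Module ℝ V]
    (coroot : V → Module.Dual ℝ V) (L Y : Finset V) {a b : V}
    (h : Relation.ReflTransGen (fun a b => b ∈ Y ∧ coroot b a ≠ 0) a b) (hb : b ∉ L) :
    ∃ n, ExitsIn coroot L Y n a := by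
  induction h using Relation.ReflTransGen.head_induction_on with
  | refl => exact ⟨0, hb⟩
  | head h _ ih =>
    obtain ⟨n, hn⟩ := ih
    exact ⟨n + 1, _, h.1, h.2, hn⟩

/-- Let `Δ` be the base of a finite reduced root system, with pairings
`⟨β, α^∨⟩ = coroot α β` (so `⟨α, α^∨⟩ = 2`, off-diagonal pairings of simple roots are
nonpositive integers, with symmetric vanishing).  Let `ΔL, ΔY ⊆ Δ` and assume that no
connected component of `ΔY` (for the neighbor relation of the Dynkin diagram) is
contained in `ΔL`: from every `α ∈ ΔY` there is a chain of neighbors inside `ΔY`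
ending outside `ΔL`.  Then there are strictly positive rationals `(c_α)_{α ∈ ΔY}`
with `Σ_{α ∈ ΔY} c_α ⟨β, α^∨⟩ ≤ 0` for every `β ∈ ΔL`. -/
theorem stmt_3 (V : Type*) [AddCommGroup V] [Module ℝ V] [FiniteDimensional ℝ V]
    (Δ : Finset V) (coroot : V → Module.Dual ℝ V)
    (hpair2 : ∀ α ∈ Δ, coroot α α = 2)
    (hoffdiag : ∀ α ∈ Δ, ∀ β ∈ Δ, α ≠ β → coroot α β ≤ 0)
    (hint : ∀ α ∈ Δ, ∀ β ∈ Δ, ∃ n : ℤ, coroot α β = (n : ℝ))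
    (hsymm : ∀ α ∈ Δ, ∀ β ∈ Δ, (coroot α β = 0 ↔ coroot β α = 0))
    (ΔL ΔY : Finset V) (hL : ΔL ⊆ Δ) (hY : ΔY ⊆ Δ)
    (hconn : ∀ α ∈ ΔY, ∃ β : V,
        Relation.ReflTransGen (fun a b => b ∈ ΔY ∧ coroot b a ≠ 0) α β ∧ β ∉ ΔL) :
    ∃ c : V → ℚ, (∀ α ∈ ΔY, 0 < c α) ∧
      ∀ β ∈ ΔL, ∑ α ∈ ΔY, (c α : ℝ) * coroot α β ≤ 0 := by
  classical
  -- `d α` is the infimum of a set that is nonempty for `α ∈ ΔY`.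
  set d : V → ℕ := fun a => sInf {n | ExitsIn coroot ΔL ΔY n a}
  refine ⟨fun a => (1 / 2) ^ d a, fun α _ => by positivity, fun β hβ => ?_⟩
  have hterm : ∀ α ∈ ΔY, α ≠ β → (((1 / 2 : ℚ) ^ d α : ℚ) : ℝ) * coroot α β ≤ 0 := by
    intro α hα hne
    have h1 := hoffdiag α (hY hα) β (hL hβ) hne
    exact mul_nonpos_of_nonneg_of_nonpos (by positivity) h1
  by_cases hβY : β ∈ ΔY
  · obtain ⟨e, he, heL⟩ := hconn β hβY
    have hmem : ExitsIn coroot ΔL ΔY (d β) β := Nat.sInf_mem (exists_exitsIn coroot ΔL ΔY he heL)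
    obtain hk | ⟨k, hk⟩ : d β = 0 ∨ ∃ k, d β = k + 1 := by
      cases d β <;> simp
    · rw [hk] at hmem
      exact absurd hβ hmem
    rw [hk] at hmem
    obtain ⟨γ, hγY, hγ0, hγ⟩ := hmem
    have hdγ : d γ ≤ k := Nat.sInf_le hγ
    have hne : γ ≠ β := by
      rintro rfl
      omega
    have hneg : coroot γ β ≤ -1 := by
      have h1 := hoffdiag γ (hY hγY) β (hL hβ) hne
      obtain ⟨m, hm⟩ := hint γ (hY hγY) β (hL hβ)
      rw [hm] at h1 hγ0 ⊢
      have h2 : m ≤ 0 := by exact_mod_cast h1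
      have h3 : m ≠ 0 := by exact_mod_cast hγ0
      have h4 : m ≤ -1 := by omega
      exact_mod_cast h4
    have hpow : (1 / 2 : ℝ) ^ k ≤ (1 / 2 : ℝ) ^ d γ :=
      pow_le_pow_of_le_one (by norm_num) (by norm_num) hdγ
    have hrest : ∑ α ∈ (ΔY.erase β).erase γ,
        (((1 / 2 : ℚ) ^ d α : ℚ) : ℝ) * coroot α β ≤ 0 := by
      refine Finset.sum_nonpos fun α hα => ?_
      simp only [Finset.mem_erase] at hα
      exact hterm α hα.2.2 hα.2.1
    beta_reduce
    rw [← Finset.add_sum_erase _ _ hβY,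
      ← Finset.add_sum_erase _ _ (Finset.mem_erase.2 ⟨hne, hγY⟩), hpair2 β (hL hβ), hk]
    have hγterm : (((1 / 2 : ℚ) ^ d γ : ℚ) : ℝ) * coroot γ β ≤ -(1 / 2 : ℝ) ^ k := by
      push_cast
      nlinarith [pow_pos (by norm_num : (0 : ℝ) < 1 / 2) (d γ)]
    have hβterm : (((1 / 2 : ℚ) ^ (k + 1) : ℚ) : ℝ) * 2 = (1 / 2 : ℝ) ^ k := by
      push_cast
      ring
    linarith
  · exact Finset.sum_nonpos fun α hα => hterm α hα fun h => hβY (h ▸ hα)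
end

section
/- Let k be a field and 0 ≤ d ≤ n. Let (A₁, A₂) and (B₁, B₂) be pairs with A₁, B₁ ∈ Mat_{n×d}(k), A₂, B₂ ∈ Mat_{(n−d)×n}(k) satisfying A₂A₁ = 0 and B₂B₁ = 0. Then there exist g ∈ GL(n,k), h₁ ∈ GL(d,k), h₂ ∈ GL(n−d,k) with B₁ = g A₁ h₁⁻¹ and B₂ = h₂ A₂ g⁻¹ if and only if rank A₁ = rank B₁ and rank A₂ = rank B₂. -/
/-!
Ranks are unchanged by multiplication with invertible matrices, so one direction is immediate.

Conversely, equal ranks give `dim range A₁ = dim range B₁` and, by rank–nullity,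
`dim ker A₂ = dim ker B₂`. Since `range A₁ ≤ ker A₂` and `range B₁ ≤ ker B₂`, these are two flags
in `k^n` with equal dimensions, and extending an isomorphism twice (`exists_equiv_extending`) gives
`g ∈ GL(n,k)` carrying the first flag to the second (`exists_equiv_flag`). Now `g A₁` and `B₁` have
the same range, so they differ by an automorphism of the source (`exists_equiv_of_range_eq`), while
`A₂` and `B₂ g` have the same kernel, so they differ by an automorphism of the target
(`exists_equiv_of_ker_eq`). These automorphisms are `h₁` and `h₂`.
-/

open Matrix

section LinearAlgebra

variable {k P V V' W W' : Type*} [Field k]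
  [AddCommGroup P] [Module k P]
  [AddCommGroup V] [Module k V] [FiniteDimensional k V]
  [AddCommGroup V'] [Module k V'] [FiniteDimensional k V']
  [AddCommGroup W] [Module k W] [FiniteDimensional k W]
  [AddCommGroup W'] [Module k W'] [FiniteDimensional k W']

/-- Two embeddings of `P` into spaces of the same finite dimension differ by an isomorphism of
these spaces: choose complements of the images and identify them by dimension. -/
theorem exists_equiv_extending (i : P →ₗ[k] V) (j : P →ₗ[k] V')
    (hi : Function.Injective i) (hj : Function.Injective j)
    (hdim : Module.finrank k V = Module.finrank k V') :
    ∃ e : V ≃ₗ[k] V', ∀ p, e (i p) = j p := by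
  obtain ⟨C, hC⟩ := Submodule.exists_isCompl (LinearMap.range i)
  obtain ⟨D, hD⟩ := Submodule.exists_isCompl (LinearMap.range j)
  have h₁ := Submodule.finrank_add_eq_of_isCompl hC
  have h₂ := Submodule.finrank_add_eq_of_isCompl hD
  let r : LinearMap.range i ≃ₗ[k] LinearMap.range j :=
    (LinearEquiv.ofInjective i hi).symm.trans (LinearEquiv.ofInjective j hj)
  have hr := r.finrank_eq
  let c : C ≃ₗ[k] D := LinearEquiv.ofFinrankEq C D (by omega)
  refine ⟨(Submodule.prodEquivOfIsCompl _ _ hC).symm.trans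
    ((r.prodCongr c).trans (Submodule.prodEquivOfIsCompl _ _ hD)), fun p => ?_⟩
  have hp : (Submodule.prodEquivOfIsCompl _ _ hC).symm (i p)
      = (LinearEquiv.ofInjective i hi p, 0) := by
    rw [LinearEquiv.symm_apply_eq]
    simp
  simp only [LinearEquiv.trans_apply, hp]
  simp [r]

/-- Any two flags `R ≤ K`, `R' ≤ K'` with equal dimensions are related by an automorphism. -/
theorem exists_equiv_flag {R K R' K' : Submodule k V} (h : R ≤ K) (h' : R' ≤ K')
    (hR : Module.finrank k R = Module.finrank k R')
    (hK : Module.finrank k K = Module.finrank k K') :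
    ∃ e : V ≃ₗ[k] V, R.map (e : V →ₗ[k] V) = R' ∧ K.map (e : V →ₗ[k] V) = K' := by
  let r : R ≃ₗ[k] R' := LinearEquiv.ofFinrankEq R R' hR
  obtain ⟨f, hf⟩ := exists_equiv_extending (Submodule.inclusion h)
    (Submodule.inclusion h' ∘ₗ (r : R →ₗ[k] R')) (Submodule.inclusion_injective h)
    ((Submodule.inclusion_injective h').comp r.injective) hK
  obtain ⟨e, he⟩ := exists_equiv_extending K.subtype (K'.subtype ∘ₗ (f : K →ₗ[k] K'))
    K.injective_subtype (K'.injective_subtype.comp f.injective) rfl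
  have heK : ∀ x : K, e x = f x := he
  have heR : ∀ x : R, e x = r x := fun x => by
    have h₁ := heK (Submodule.inclusion h x)
    rw [hf x] at h₁
    exact h₁
  refine ⟨e, Submodule.eq_of_le_of_finrank_eq ?_ ?_, Submodule.eq_of_le_of_finrank_eq ?_ ?_⟩
  · rintro _ ⟨x, hx, rfl⟩
    have := heR ⟨x, hx⟩
    simp only [LinearEquiv.coe_coe]
    exact this ▸ (r ⟨x, hx⟩).2
  · rw [← hR]
    exact LinearEquiv.finrank_map_eq e R
  · rintro _ ⟨x, hx, rfl⟩
    have := heK ⟨x, hx⟩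
    simp only [LinearEquiv.coe_coe]
    exact this ▸ (f ⟨x, hx⟩).2
  · rw [← hK]
    exact LinearEquiv.finrank_map_eq e K

/-- Both maps factor through embeddings of `V ⧸ ker f`, to which `exists_equiv_extending`
applies. -/
theorem exists_equiv_of_ker_eq (f : V →ₗ[k] W) (f' : V →ₗ[k] W')
    (hker : LinearMap.ker f = LinearMap.ker f')
    (hdim : Module.finrank k W = Module.finrank k W') :
    ∃ e : W ≃ₗ[k] W', ∀ v, e (f v) = f' v := by
  obtain ⟨e, he⟩ := exists_equiv_extending
    ((LinearMap.ker f).liftQ f le_rfl) ((LinearMap.ker f).liftQ f' hker.le)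
    (LinearMap.ker_eq_bot.1 (Submodule.ker_liftQ_eq_bot _ _ _ le_rfl))
    (LinearMap.ker_eq_bot.1 (Submodule.ker_liftQ_eq_bot _ _ _ hker.ge)) hdim
  exact ⟨e, fun v => by simpa using he (Submodule.Quotient.mk v)⟩

/-- A surjection splits as the first projection of a product with its kernel. -/
theorem exists_equiv_prod_ker (f : V →ₗ[k] P) (hf : LinearMap.range f = ⊤) :
    ∃ e : V ≃ₗ[k] P × LinearMap.ker f, ∀ v, (e v).1 = f v := by
  obtain ⟨C, hC⟩ := Submodule.exists_isCompl (LinearMap.ker f)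
  refine ⟨LinearMap.equivProdOfSurjectiveOfIsCompl f
    ((LinearMap.ker f).projectionOnto C hC) hf (by simp) (by simpa using hC), fun v => by simp⟩

theorem exists_equiv_of_range_eq (f : V →ₗ[k] W) (f' : V' →ₗ[k] W)
    (hrange : LinearMap.range f = LinearMap.range f')
    (hdim : Module.finrank k V = Module.finrank k V') :
    ∃ e : V ≃ₗ[k] V', ∀ v, f' (e v) = f v := by
  obtain ⟨a, ha⟩ := exists_equiv_prod_ker f.rangeRestrict (LinearMap.range_rangeRestrict f)
  obtain ⟨b, hb⟩ := exists_equiv_prod_ker f'.rangeRestrict (LinearMap.range_rangeRestrict f')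
  have h₁ := a.finrank_eq
  have h₂ := b.finrank_eq
  rw [Module.finrank_prod] at h₁ h₂
  have h₃ : Module.finrank k (LinearMap.range f) = Module.finrank k (LinearMap.range f') := by
    rw [hrange]
  let c : LinearMap.ker f.rangeRestrict ≃ₗ[k] LinearMap.ker f'.rangeRestrict :=
    LinearEquiv.ofFinrankEq _ _ (by omega)
  let m := (LinearEquiv.ofEq _ _ hrange).prodCongr c
  refine ⟨a.trans (m.trans b.symm), fun v => ?_⟩
  have h := congrArg Subtype.val (hb (b.symm (m (a v))))
  rw [LinearEquiv.apply_symm_apply] at h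
  have h' := congrArg Subtype.val (ha v)
  change _ = f' (b.symm (m (a v))) at h
  change _ = f v at h'
  simp only [LinearEquiv.trans_apply]
  rw [← h, ← h']
  rfl

end LinearAlgebra

/-- The invertible matrix of a linear automorphism of `k^m`. -/
noncomputable def equivToGL {k : Type*} [Field k] {m : ℕ}
    (e : (Fin m → k) ≃ₗ[k] (Fin m → k)) : GL (Fin m) k where
  val := LinearMap.toMatrix' (e : (Fin m → k) →ₗ[k] (Fin m → k))
  inv := LinearMap.toMatrix' (e.symm : (Fin m → k) →ₗ[k] (Fin m → k))
  val_inv := by rw [← LinearMap.toMatrix'_comp]; simp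
  inv_val := by rw [← LinearMap.toMatrix'_comp]; simp

theorem equivToGL_mulVec {k : Type*} [Field k] {m : ℕ}
    (e : (Fin m → k) ≃ₗ[k] (Fin m → k)) (v : Fin m → k) :
    (equivToGL e : Matrix (Fin m) (Fin m) k) *ᵥ v = e v := by
  simp [equivToGL, LinearMap.toMatrix'_mulVec]

/-- Two points `(A₁, A₂)`, `(B₁, B₂)` of the variety of complexes
`k^d → k^n → k^{n-d}` lie in the same orbit of `GL(n,k) × GL(d,k) × GL(n-d,k)`
(acting by `(g,h₁,h₂)·(A₁,A₂) = (g A₁ h₁⁻¹, h₂ A₂ g⁻¹)`) if and only if the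
corresponding ranks coincide. -/
theorem stmt_4 (k : Type*) [Field k] (n d : ℕ) (hd : d ≤ n)
    (A₁ B₁ : Matrix (Fin n) (Fin d) k) (A₂ B₂ : Matrix (Fin (n - d)) (Fin n) k)
    (hA : A₂ * A₁ = 0) (hB : B₂ * B₁ = 0) :
    (∃ (g : GL (Fin n) k) (h₁ : GL (Fin d) k) (h₂ : GL (Fin (n - d)) k),
        B₁ = (g : Matrix (Fin n) (Fin n) k) * A₁ * ((h₁⁻¹ : GL (Fin d) k) : Matrix (Fin d) (Fin d) k) ∧
        B₂ = (h₂ : Matrix (Fin (n - d)) (Fin (n - d)) k) * A₂ *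
              ((g⁻¹ : GL (Fin n) k) : Matrix (Fin n) (Fin n) k))
      ↔ (A₁.rank = B₁.rank ∧ A₂.rank = B₂.rank) := by
  constructor
  · rintro ⟨g, h₁, h₂, rfl, rfl⟩
    have hdet : ∀ {m : ℕ} (u : GL (Fin m) k), IsUnit (u : Matrix (Fin m) (Fin m) k).det :=
      fun u => (Matrix.isUnit_iff_isUnit_det _).1 u.isUnit
    constructor
    · rw [Matrix.rank_mul_eq_left_of_isUnit_det _ _ (hdet _),
        Matrix.rank_mul_eq_right_of_isUnit_det _ _ (hdet _)]
    · rw [Matrix.rank_mul_eq_left_of_isUnit_det _ _ (hdet _),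
        Matrix.rank_mul_eq_right_of_isUnit_det _ _ (hdet _)]
  · rintro ⟨hr₁, hr₂⟩
    have hle : ∀ (X : Matrix (Fin n) (Fin d) k) (Y : Matrix (Fin (n - d)) (Fin n) k),
        Y * X = 0 → LinearMap.range X.mulVecLin ≤ LinearMap.ker Y.mulVecLin := by
      rintro X Y h _ ⟨v, rfl⟩
      simp [h]
    have hkA := LinearMap.finrank_range_add_finrank_ker A₂.mulVecLin
    have hkB := LinearMap.finrank_range_add_finrank_ker B₂.mulVecLin
    have hr₂' : Module.finrank k (LinearMap.range A₂.mulVecLin)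
      = Module.finrank k (LinearMap.range B₂.mulVecLin) := hr₂
    obtain ⟨e, heR, heK⟩ := exists_equiv_flag (hle _ _ hA) (hle _ _ hB) hr₁ (by omega)
    obtain ⟨a, ha⟩ := exists_equiv_of_range_eq
      ((e : (Fin n → k) →ₗ[k] (Fin n → k)) ∘ₗ A₁.mulVecLin) B₁.mulVecLin
      (by rw [LinearMap.range_comp, heR]) rfl
    obtain ⟨b, hb⟩ := exists_equiv_of_ker_eq A₂.mulVecLin
      (B₂.mulVecLin ∘ₗ (e : (Fin n → k) →ₗ[k] (Fin n → k)))
      (by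
        rw [LinearMap.ker_comp, ← heK]
        exact (Submodule.comap_map_eq_of_injective e.injective _).symm) rfl
    refine ⟨equivToGL e, equivToGL a, equivToGL b, ?_, ?_⟩
    · have h : (equivToGL e : Matrix (Fin n) (Fin n) k) * A₁ = B₁ * (equivToGL a).val := by
        refine Matrix.ext_of_mulVec_single fun i => ?_
        rw [← Matrix.mulVec_mulVec, ← Matrix.mulVec_mulVec, equivToGL_mulVec, equivToGL_mulVec]
        exact (ha _).symm
      rw [h, Matrix.mul_assoc, Units.mul_inv, Matrix.mul_one]
    · have h : (equivToGL b).val * A₂ = B₂ * (equivToGL e).val := by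
        refine Matrix.ext_of_mulVec_single fun i => ?_
        rw [← Matrix.mulVec_mulVec, ← Matrix.mulVec_mulVec, equivToGL_mulVec, equivToGL_mulVec]
        exact hb _
      rw [h, Matrix.mul_assoc, Units.mul_inv, Matrix.mul_one]
end

section
/- Let 0 ≤ d ≤ n and let (A₁, A₂) and (B₁, B₂) be pairs with A₁, B₁ ∈ Mat_{n×d}(ℂ), A₂, B₂ ∈ Mat_{(n−d)×n}(ℂ) satisfying A₂A₁ = 0 and B₂B₁ = 0. Then (B₁, B₂) lies in the closure (with respect to the standard topology on pairs of complex matrices) of the orbit {(g A₁ h₁⁻¹, h₂ A₂ g⁻¹) : g ∈ GL(n,ℂ), h₁ ∈ GL(d,ℂ), h₂ ∈ GL(n−d,ℂ)} if and only if rank B₁ ≤ rank A₁ and rank B₂ ≤ rank A₂. -/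
open Matrix

/-!
Rank is lower semicontinuous and constant on orbits, which gives the rank inequalities on the
orbit closure (`isClosed_rank_le`).

Conversely, put `P = im A₁ ≤ Q = ker A₂` and `P' = im B₁ ≤ Q' = ker B₂`. The rank inequalities say
`dim P' ≤ dim P` and `dim Q ≤ dim Q'`, so an injection `P' → P` and then an injection `Q → Q'`
compatible with it exist, and the latter extends to an automorphism `g` of `ℂⁿ` with `P' ≤ g P`
and `g Q ≤ Q'` (`exists_linearEquiv_flag`). These inclusions amount to factorizations
`B₁ = g A₁ M₁` and `B₂ = M₂ A₂ g⁻¹` with square matrices `M₁`, `M₂`. Since invertible matrices are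
dense (`mem_closure_units`), `M₁` and `M₂` are limits of invertible matrices, so `(B₁, B₂)` is a
limit of points of the orbit.
-/

section LinearAlgebra

variable {K W X Y Z : Type*} [Field K] [AddCommGroup W] [Module K W] [AddCommGroup X] [Module K X]
  [AddCommGroup Y] [Module K Y] [AddCommGroup Z] [Module K Z]

/-- Extension of an injection `f : W → Y` along an injection `i : W → X`, keeping injectivity:
a complement of `i(W)` is sent injectively into a complement of `f(W)`. -/
lemma exists_injective_extend [FiniteDimensional K X] [FiniteDimensional K Y]
    (i : W →ₗ[K] X) (hi : Function.Injective i) (f : W →ₗ[K] Y) (hf : Function.Injective f)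
    (h : Module.finrank K X ≤ Module.finrank K Y) :
    ∃ j : X →ₗ[K] Y, Function.Injective j ∧ ∀ w, j (i w) = f w := by
  obtain ⟨C, hC⟩ := Submodule.exists_isCompl (LinearMap.range i)
  obtain ⟨D, hD⟩ := Submodule.exists_isCompl (LinearMap.range f)
  have h1 := Submodule.finrank_add_eq_of_isCompl hC
  have h2 := Submodule.finrank_add_eq_of_isCompl hD
  rw [LinearMap.finrank_range_of_inj hi] at h1
  rw [LinearMap.finrank_range_of_inj hf] at h2
  obtain ⟨k, hk⟩ := (finrank_le_iff_exists_linearMap (R := K) (M := C) (M' := D)).1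
    (by omega)
  let e : (W × C) ≃ₗ[K] X :=
    ((LinearEquiv.ofInjective i hi).prodCongr (LinearEquiv.refl K C)) ≪≫ₗ
      Submodule.prodEquivOfIsCompl _ _ hC
  have he : ∀ w, e (w, 0) = i w := fun w => by simp [e]
  refine ⟨(f.coprod (D.subtype ∘ₗ k)) ∘ₗ e.symm.toLinearMap, ?_, fun w => ?_⟩
  · have hinj : Function.Injective (f.coprod (D.subtype ∘ₗ k)) := by
      rw [← LinearMap.ker_eq_bot, LinearMap.ker_coprod_of_disjoint_range, LinearMap.ker_eq_bot.2 hf,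
        LinearMap.ker_eq_bot.2, Submodule.prod_bot]
      · exact D.injective_subtype.comp hk
      · refine hD.disjoint.mono_right ?_
        rintro _ ⟨c, rfl⟩
        exact (k c).2
    exact hinj.comp e.symm.injective
  · simp [← he w]

/-- For `P ≤ Q` and `P' ≤ Q'` with `dim P' ≤ dim P` and `dim Q ≤ dim Q'`, some automorphism `g`
satisfies `P' ≤ g P` and `g Q ≤ Q'`. -/
lemma exists_linearEquiv_flag [FiniteDimensional K X] (P Q P' Q' : Submodule K X)
    (hPQ : P ≤ Q) (hPQ' : P' ≤ Q') (h₁ : Module.finrank K P' ≤ Module.finrank K P)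
    (h₂ : Module.finrank K Q ≤ Module.finrank K Q') :
    ∃ g : X ≃ₗ[K] X, (∀ x ∈ P', ∃ y ∈ P, g y = x) ∧ ∀ x ∈ Q, g x ∈ Q' := by
  obtain ⟨i, hi⟩ := finrank_le_iff_exists_linearMap.1 h₁
  obtain ⟨j, hj, hji⟩ := exists_injective_extend
    (Submodule.inclusion hPQ ∘ₗ i) ((Submodule.inclusion_injective hPQ).comp hi)
    (Submodule.inclusion hPQ') (Submodule.inclusion_injective hPQ') h₂
  obtain ⟨g, hg, hgj⟩ := exists_injective_extend Q.subtype Q.injective_subtype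
    (Q'.subtype ∘ₗ j) (Q'.injective_subtype.comp hj) le_rfl
  refine ⟨LinearEquiv.ofInjectiveEndo g hg, fun x hx => ⟨i ⟨x, hx⟩, (i ⟨x, hx⟩).2, ?_⟩,
    fun x hx => ?_⟩
  · have a := hgj (Submodule.inclusion hPQ (i ⟨x, hx⟩))
    have b := congrArg Subtype.val (hji ⟨x, hx⟩)
    simp only [LinearMap.comp_apply, Submodule.subtype_apply] at a b
    rw [b] at a
    simpa using a
  · have a := hgj ⟨x, hx⟩
    simp only [LinearMap.comp_apply, Submodule.subtype_apply] at a
    simp [a]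

lemma exists_comp_eq_of_range_le (f : X →ₗ[K] Z) (f' : Y →ₗ[K] Z)
    (h : LinearMap.range f' ≤ LinearMap.range f) : ∃ m : Y →ₗ[K] X, f ∘ₗ m = f' := by
  obtain ⟨m, hm⟩ := Module.projective_lifting_property f.rangeRestrict
    (f'.codRestrict (LinearMap.range f) fun y => h ⟨y, rfl⟩) f.surjective_rangeRestrict
  refine ⟨m, LinearMap.ext fun y => ?_⟩
  simpa using congrArg Subtype.val (LinearMap.congr_fun hm y)

lemma exists_comp_eq_of_ker_le (f : X →ₗ[K] Y) (f' : X →ₗ[K] Z)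
    (h : LinearMap.ker f ≤ LinearMap.ker f') : ∃ m : Y →ₗ[K] Z, m ∘ₗ f = f' := by
  obtain ⟨s, hs⟩ := f.rangeRestrict.exists_rightInverse_of_surjective f.range_rangeRestrict
  obtain ⟨m, hm⟩ := LinearMap.exists_extend (f' ∘ₗ s)
  refine ⟨m, LinearMap.ext fun x => ?_⟩
  have a := LinearMap.congr_fun hm (f.rangeRestrict x)
  have b := congrArg Subtype.val (LinearMap.congr_fun hs (f.rangeRestrict x))
  have c : s (f.rangeRestrict x) - x ∈ LinearMap.ker f' := h (by simpa [sub_eq_zero] using b)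
  rw [LinearMap.mem_ker, map_sub, sub_eq_zero] at c
  simpa [c] using a

end LinearAlgebra

/-- The matrix `M` is the limit of `M - t` as `t → 0` outside the finite spectrum of `M`. -/
lemma mem_closure_units {k : ℕ} (M : Matrix (Fin k) (Fin k) ℂ) :
    M ∈ closure (Set.range ((↑) : GL (Fin k) ℂ → Matrix (Fin k) (Fin k) ℂ)) := by
  let φ : ℂ → Matrix (Fin k) (Fin k) ℂ := fun t => M - algebraMap ℂ _ t
  have hφ : Continuous φ := by
    have : Continuous (Algebra.linearMap ℂ (Matrix (Fin k) (Fin k) ℂ)) :=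
      LinearMap.continuous_of_finiteDimensional _
    exact continuous_const.sub this
  have hd : Dense (spectrum ℂ M)ᶜ := (Matrix.finite_spectrum M).countable.dense_compl ℂ
  have h0 : M = φ 0 := by simp [φ]
  rw [h0]
  refine map_mem_closure hφ (hd 0) fun t ht => ?_
  have ht' : IsUnit (algebraMap ℂ _ t - M) := spectrum.notMem_iff.1 ht
  obtain ⟨u, hu⟩ := ht'.neg
  exact ⟨u, by simpa [φ] using hu⟩

lemma isClosed_rank_le (k l r : ℕ) :
    IsClosed {M : Matrix (Fin k) (Fin l) ℂ | M.rank ≤ r} := by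
  let Φ : Matrix (Fin k) (Fin l) ℂ →ₗ[ℂ] ((Fin l → ℂ) →L[ℂ] (Fin k → ℂ)) :=
    LinearMap.toContinuousLinearMap.toLinearMap ∘ₗ Matrix.toLin'.toLinearMap
  have hΦ : Continuous Φ := LinearMap.continuous_of_finiteDimensional _
  have ho := (isOpen_setOfPred_nat_le_rank (𝕜 := ℂ) (E := Fin l → ℂ) (F := Fin k → ℂ)
    (r + 1)).preimage hΦ
  rw [← isOpen_compl_iff]
  convert ho using 1
  ext M
  change ¬ Module.finrank ℂ (LinearMap.range M.mulVecLin) ≤ r ↔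
    ((r + 1 : ℕ) : Cardinal) ≤ Module.rank ℂ (LinearMap.range M.mulVecLin)
  rw [← Module.finrank_eq_rank, Nat.cast_le]
  omega

/-- In the variety of complexes over `ℂ`, the point `(B₁, B₂)` lies in the closure
(standard topology) of the `GL(n,ℂ) × GL(d,ℂ) × GL(n-d,ℂ)`-orbit of `(A₁, A₂)`
if and only if `rank B₁ ≤ rank A₁` and `rank B₂ ≤ rank A₂`. -/
theorem stmt_5 (n d : ℕ) (hd : d ≤ n)
    (A₁ B₁ : Matrix (Fin n) (Fin d) ℂ) (A₂ B₂ : Matrix (Fin (n - d)) (Fin n) ℂ)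
    (hA : A₂ * A₁ = 0) (hB : B₂ * B₁ = 0) :
    (B₁, B₂) ∈ closure {p : Matrix (Fin n) (Fin d) ℂ × Matrix (Fin (n - d)) (Fin n) ℂ |
        ∃ (g : GL (Fin n) ℂ) (h₁ : GL (Fin d) ℂ) (h₂ : GL (Fin (n - d)) ℂ),
          p = ((g : Matrix (Fin n) (Fin n) ℂ) * A₁ *
                ((h₁⁻¹ : GL (Fin d) ℂ) : Matrix (Fin d) (Fin d) ℂ),
               (h₂ : Matrix (Fin (n - d)) (Fin (n - d)) ℂ) * A₂ *
                ((g⁻¹ : GL (Fin n) ℂ) : Matrix (Fin n) (Fin n) ℂ))}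
      ↔ (B₁.rank ≤ A₁.rank ∧ B₂.rank ≤ A₂.rank) := by
  constructor
  · intro h
    have hc : IsClosed {p : Matrix (Fin n) (Fin d) ℂ × Matrix (Fin (n - d)) (Fin n) ℂ |
        p.1.rank ≤ A₁.rank ∧ p.2.rank ≤ A₂.rank} :=
      ((isClosed_rank_le n d A₁.rank).preimage continuous_fst).inter
        ((isClosed_rank_le (n - d) n A₂.rank).preimage continuous_snd)
    suffices hs : (B₁, B₂) ∈ {p : Matrix (Fin n) (Fin d) ℂ × Matrix (Fin (n - d)) (Fin n) ℂ |
        p.1.rank ≤ A₁.rank ∧ p.2.rank ≤ A₂.rank} from hs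
    refine hc.closure_subset_iff.2 ?_ h
    rintro _ ⟨g, h₁, h₂, rfl⟩
    exact ⟨(rank_mul_le_left _ _).trans (rank_mul_le_right _ _),
      (rank_mul_le_left _ _).trans (rank_mul_le_right _ _)⟩
  · rintro ⟨hr₁, hr₂⟩
    have hle : ∀ {A : Matrix (Fin n) (Fin d) ℂ} {A' : Matrix (Fin (n - d)) (Fin n) ℂ},
        A' * A = 0 → LinearMap.range (toLin' A) ≤ LinearMap.ker (toLin' A') := by
      rintro A A' h _ ⟨x, rfl⟩
      rw [LinearMap.mem_ker, ← toLin'_mul_apply, h, map_zero, LinearMap.zero_apply]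
    obtain ⟨e, he₁, he₂⟩ := exists_linearEquiv_flag (K := ℂ)
      (LinearMap.range (toLin' A₁)) (LinearMap.ker (toLin' A₂))
      (LinearMap.range (toLin' B₁)) (LinearMap.ker (toLin' B₂)) (hle hA) (hle hB) hr₁ (by
        have a := LinearMap.finrank_range_add_finrank_ker (toLin' A₂)
        have b := LinearMap.finrank_range_add_finrank_ker (toLin' B₂)
        change Module.finrank ℂ (LinearMap.range (toLin' B₂)) ≤
          Module.finrank ℂ (LinearMap.range (toLin' A₂)) at hr₂
        omega)
    obtain ⟨m₁, hm₁⟩ := exists_comp_eq_of_range_le (e.toLinearMap ∘ₗ toLin' A₁) (toLin' B₁) (by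
      rintro x hx
      obtain ⟨_, ⟨y, rfl⟩, rfl⟩ := he₁ x hx
      exact ⟨y, rfl⟩)
    obtain ⟨m₂, hm₂⟩ := exists_comp_eq_of_ker_le (toLin' A₂ ∘ₗ e.symm.toLinearMap) (toLin' B₂) (by
      intro x hx
      simpa using he₂ (e.symm x) hx)
    let g : GL (Fin n) ℂ :=
      ⟨LinearMap.toMatrix' e.toLinearMap, LinearMap.toMatrix' e.symm.toLinearMap,
        by rw [← LinearMap.toMatrix'_comp]; simp, by rw [← LinearMap.toMatrix'_comp]; simp⟩
    have e₁ : B₁ = (g : Matrix (Fin n) (Fin n) ℂ) * A₁ * LinearMap.toMatrix' m₁ := by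
      have := congrArg LinearMap.toMatrix' hm₁
      simpa [LinearMap.toMatrix'_comp] using this.symm
    have e₂ : B₂ = LinearMap.toMatrix' m₂ * A₂ *
        ((g⁻¹ : GL (Fin n) ℂ) : Matrix (Fin n) (Fin n) ℂ) := by
      have := congrArg LinearMap.toMatrix' hm₂
      change B₂ = LinearMap.toMatrix' m₂ * A₂ * LinearMap.toMatrix' e.symm.toLinearMap
      simpa [LinearMap.toMatrix'_comp, Matrix.mul_assoc] using this.symm
    let Ψ : Matrix (Fin d) (Fin d) ℂ × Matrix (Fin (n - d)) (Fin (n - d)) ℂ →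
        Matrix (Fin n) (Fin d) ℂ × Matrix (Fin (n - d)) (Fin n) ℂ := fun q =>
      ((g : Matrix (Fin n) (Fin n) ℂ) * A₁ * q.1,
        q.2 * A₂ * ((g⁻¹ : GL (Fin n) ℂ) : Matrix (Fin n) (Fin n) ℂ))
    have hΨ : Continuous Ψ :=
      (continuous_const.matrix_mul continuous_fst).prodMk
        ((continuous_snd.matrix_mul continuous_const).matrix_mul continuous_const)
    have hB' : (B₁, B₂) = Ψ (LinearMap.toMatrix' m₁, LinearMap.toMatrix' m₂) := Prod.ext e₁ e₂
    rw [hB']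
    refine map_mem_closure hΨ (s := Set.range ((↑) : GL (Fin d) ℂ → Matrix (Fin d) (Fin d) ℂ) ×ˢ
      Set.range ((↑) : GL (Fin (n - d)) ℂ → Matrix (Fin (n - d)) (Fin (n - d)) ℂ)) ?_ ?_
    · rw [closure_prod_eq]
      exact ⟨mem_closure_units _, mem_closure_units _⟩
    · rintro ⟨_, _⟩ ⟨⟨u, rfl⟩, ⟨v, rfl⟩⟩
      exact ⟨g, u⁻¹, v, by simp only [inv_inv, Ψ]⟩
end

section
/- Let k be a field and n ≥ 1. For A, B ∈ Mat_{n×(n−1)}(k), there exists g ∈ SL(n,k) with gA = B if and only if the kernels of the linear maps k^{n−1} → k^n determined by A and B coincide, i.e., {v ∈ k^{n−1} : Av = 0} = {v ∈ k^{n−1} : Bv = 0}. -/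
/-!
If `ker A = ker B`, then `A v ↦ B v` is a well-defined isomorphism `range A ≃ range B`, and it
extends to an automorphism `e` of `k^n`, so `e ∘ A = B`. Since `B` has only `n - 1 < n` columns,
some nonzero functional `f` vanishes on `range B`. A map `x ↦ x + f x • u` fixes `range B`
pointwise and has determinant `1 + f u`; choosing `u` with `1 + f u = (det e)⁻¹` and composing with
`e` gives an element of `SL(n, k)` carrying `A` to `B`.
-/

open Matrix

/-- Two `n × (n-1)` matrices over a field lie in the same `SL(n,k)`-orbit for
left multiplication if and only if they have the same kernel. -/
theorem stmt_6 (k : Type*) [Field k] (n : ℕ) (hn : 1 ≤ n)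
    (A B : Matrix (Fin n) (Fin (n - 1)) k) :
    (∃ g : Matrix.SpecialLinearGroup (Fin n) k,
        (g : Matrix (Fin n) (Fin n) k) * A = B)
      ↔ LinearMap.ker A.mulVecLin = LinearMap.ker B.mulVecLin := by
  constructor
  · rintro ⟨g, rfl⟩
    have hg : IsUnit (g : Matrix (Fin n) (Fin n) k) := by
      rw [Matrix.isUnit_iff_isUnit_det, g.det_coe]
      exact isUnit_one
    rw [Matrix.mulVecLin_mul, LinearMap.ker_comp_of_ker_eq_bot]
    exact LinearMap.ker_eq_bot.2 (Matrix.mulVec_injective_of_isUnit hg)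
  · intro h
    obtain ⟨e, he⟩ := Submodule.exists_linearEquiv_restrict_eq
      (A.mulVecLin.quotKerEquivRange.symm ≪≫ₗ Submodule.quotEquivOfEq _ _ h ≪≫ₗ
        B.mulVecLin.quotKerEquivRange)
    have heAB (v : Fin (n - 1) → k) : e (A *ᵥ v) = B *ᵥ v := by
      have := he ⟨A.mulVecLin v, LinearMap.mem_range_self _ v⟩
      simp only [LinearEquiv.trans_apply, LinearMap.quotKerEquivRange_symm_apply_image,
        Submodule.mkQ_apply, Submodule.quotEquivOfEq_mk,
        LinearMap.quotKerEquivRange_apply_mk] at this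
      exact this.symm
    have hlt : LinearMap.range B.mulVecLin < ⊤ := by
      rw [lt_top_iff_ne_top]
      intro htop
      have h1 := LinearMap.finrank_range_le B.mulVecLin
      rw [htop, finrank_top, Module.finrank_fin_fun, Module.finrank_fin_fun] at h1
      omega
    obtain ⟨f, hf0, hf⟩ := Submodule.exists_le_ker_of_lt_top _ hlt
    obtain ⟨u, hu⟩ := LinearMap.surjective hf0
      ((LinearMap.det (e : (Fin n → k) →ₗ[k] (Fin n → k)))⁻¹ - 1)
    refine ⟨⟨LinearMap.toMatrix' (LinearMap.transvection f u ∘ₗ e.toLinearMap), ?_⟩, ?_⟩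
    · rw [LinearMap.det_toMatrix', LinearMap.det_comp, LinearMap.transvection.det, hu,
        add_sub_cancel, inv_mul_cancel₀ (LinearEquiv.isUnit_det' e).ne_zero]
    · refine Matrix.ext_of_mulVec_single fun i => ?_
      have hfB : f (B *ᵥ Pi.single i 1) = 0 := hf (LinearMap.mem_range_self B.mulVecLin _)
      rw [← Matrix.mulVec_mulVec, LinearMap.toMatrix'_mulVec, LinearMap.comp_apply,
        LinearEquiv.coe_coe, heAB, LinearMap.transvection.apply, hfB, zero_smul, add_zero]
end

section
/- Let k be a field of characteristic 0 and l ≥ 1. Let A, B ∈ Mat_{2l×l}(k) satisfy AᵀJA = 0 and BᵀJB = 0. Then there exists g ∈ Sp(2l,k) with gA = B if and only if the kernels of the linear maps k^l → k^{2l} determined by A and B coincide, i.e., {v ∈ k^l : Av = 0} = {v ∈ k^l : Bv = 0}. -/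
/-!
Since an invertible `g` does not change kernels, only the converse needs an argument. Write a
`2l × l` matrix as two square blocks `X` (top) and `Y` (bottom); its image is isotropic exactly when
`Xᵀ * Y` is symmetric.

The main point is `exists_normalForm`: such a matrix can be moved by the symplectic group to one with
bottom block zero. An upper shear `X ↦ X + T * Y` (`T` symmetric) first achieves
`ker X ⊆ ker Y` (`exists_shear`): after diagonalizing `X = R * diagonal d * Q`, take for `T` the
congruence transform by `R` of the indicator of `{i | d i = 0}`. Then `Y = S * X` for a
*symmetric* `S`, written down explicitly with a generalized inverse of `X`
(`exists_symm_mul_eq`), and a lower shear by `-S` kills `Y`.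

Once both matrices have bottom block zero, their top blocks are square matrices with the same kernel,
so they differ by an invertible `h` (`exists_isUnit_mul_eq`), and the block diagonal matrix with
blocks `h` and `(h⁻¹)ᵀ` is symplectic.

The symplectic group of Mathlib is taken with respect to `J = -stdJ`, which defines the same group.
-/

open Matrix

/-- The standard symplectic matrix `J = [[0, I],[−I, 0]]`. -/
def stdJ (k : Type*) [Field k] (l : ℕ) : Matrix (Fin l ⊕ Fin l) (Fin l ⊕ Fin l) k :=
  Matrix.fromBlocks 0 1 (-1) 0

namespace SymplecticOrbit

variable {k : Type*} [Field k] {l : ℕ}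

/-- Square matrices are equivalent to diagonal ones. -/
lemma exists_diagonal (X : Matrix (Fin l) (Fin l) k) :
    ∃ (R Q : Matrix (Fin l) (Fin l) k) (d : Fin l → k),
      IsUnit R ∧ IsUnit Q ∧ X = R * diagonal d * Q := by
  obtain ⟨L, L', d, h⟩ := Pivot.exists_list_transvec_mul_diagonal_mul_list_transvec X
  refine ⟨_, _, d, ?_, ?_, h⟩ <;>
    simp [isUnit_iff_isUnit_det, TransvectionStruct.det_toMatrix_prod]

lemma mulVec_eq_zero_of_isUnit {R : Matrix (Fin l) (Fin l) k} (hR : IsUnit R) {v : Fin l → k}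
    (h : R *ᵥ v = 0) : v = 0 :=
  mulVec_injective_of_isUnit hR (by simpa using h)

/-- If `Xᵀ * Y` is symmetric, some upper shear makes the kernel of the top block equal to the
common kernel of both blocks; only the inclusion in `ker Y` is recorded, the rest being formal. -/
lemma exists_shear (X Y : Matrix (Fin l) (Fin l) k) (hXY : Xᵀ * Y = Yᵀ * X) :
    ∃ T : Matrix (Fin l) (Fin l) k, Tᵀ = T ∧
      ∀ v, (X + T * Y) *ᵥ v = 0 → Y *ᵥ v = 0 := by
  obtain ⟨R, Q, d, hR, hQ, rfl⟩ := exists_diagonal X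
  classical
  let e : Fin l → k := fun i => if d i = 0 then 1 else 0
  refine ⟨R * diagonal e * Rᵀ, by simp [Matrix.mul_assoc], fun v hv => ?_⟩
  set w := Rᵀ *ᵥ (Y *ᵥ v) with hw
  have h1 : diagonal d *ᵥ (Q *ᵥ v) + diagonal e *ᵥ w = 0 := by
    apply mulVec_eq_zero_of_isUnit hR
    rw [← hv, hw]
    simp only [mulVec_add, add_mulVec, mulVec_mulVec, Matrix.mul_assoc]
  -- The two summands have disjoint supports, so both vanish.
  have h2 : ∀ i, d i * (Q *ᵥ v) i = 0 ∧ (d i = 0 → w i = 0) := by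
    intro i
    have := congrFun h1 i
    simp only [Pi.add_apply, mulVec_diagonal, Pi.zero_apply, e] at this
    by_cases hd : d i = 0
    · simpa [hd] using this
    · simpa [hd] using this
  have h3 : diagonal d *ᵥ (Q *ᵥ v) = 0 := by
    ext i
    simpa [mulVec_diagonal] using (h2 i).1
  -- Symmetry of `Xᵀ * Y` puts `Y v` in the orthogonal complement of the range of `X`.
  have h4 : diagonal d *ᵥ w = 0 := by
    have hQt : IsUnit Qᵀ := by simpa [isUnit_iff_isUnit_det] using hQ
    apply mulVec_eq_zero_of_isUnit hQt
    have := congrArg (· *ᵥ v) hXY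
    simp only [transpose_mul, diagonal_transpose, ← mulVec_mulVec, h3, mulVec_zero] at this
    exact this
  have h5 : w = 0 := by
    ext i
    have := congrFun h4 i
    simp only [mulVec_diagonal, Pi.zero_apply, mul_eq_zero] at this
    exact this.elim (h2 i).2 id
  have hRt : IsUnit Rᵀ := by simpa [isUnit_iff_isUnit_det] using hR
  exact mulVec_eq_zero_of_isUnit hRt h5

/-- If `ker X ⊆ ker Y` and `Xᵀ * Y` is symmetric, then `Y` factors through `X` via a symmetric
matrix. -/
lemma exists_symm_mul_eq (X Y : Matrix (Fin l) (Fin l) k) (hXY : Xᵀ * Y = Yᵀ * X)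
    (hker : ∀ v, X *ᵥ v = 0 → Y *ᵥ v = 0) :
    ∃ S : Matrix (Fin l) (Fin l) k, Sᵀ = S ∧ S * X = Y := by
  -- `G` is a generalized inverse of `X`; the convention `0⁻¹ = 0` is used on the diagonal.
  obtain ⟨G, hG⟩ : ∃ G, X * G * X = X := by
    obtain ⟨R, Q, d, hR, hQ, rfl⟩ := exists_diagonal X
    rw [isUnit_iff_isUnit_det] at hR hQ
    refine ⟨Q⁻¹ * diagonal (fun i => (d i)⁻¹) * R⁻¹, ?_⟩
    have hd : diagonal d * (diagonal (fun i => (d i)⁻¹) * diagonal d) = diagonal d := by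
      simp only [diagonal_mul_diagonal]
      congr 1
      ext i
      by_cases h : d i = 0 <;> simp [h]
    calc _ = R * (diagonal d * ((Q * Q⁻¹) * (diagonal (fun i => (d i)⁻¹) *
          ((R⁻¹ * R) * diagonal d)))) * Q := by simp only [Matrix.mul_assoc]
      _ = _ := by
        rw [mul_nonsing_inv _ hQ, nonsing_inv_mul _ hR, Matrix.one_mul, Matrix.one_mul, hd]
  have hY : Y * G * X = Y := by
    refine ext_of_mulVec_single fun i => ?_
    have := hker (Pi.single i 1 - (G * X) *ᵥ Pi.single i 1) (by
      rw [mulVec_sub, mulVec_mulVec, ← Matrix.mul_assoc, hG, sub_self])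
    rw [mulVec_sub, mulVec_mulVec, ← Matrix.mul_assoc, sub_eq_zero] at this
    exact this.symm
  refine ⟨Y * G + Gᵀ * Yᵀ - Gᵀ * Yᵀ * X * G, ?_, ?_⟩
  · simp only [transpose_sub, transpose_add, transpose_mul, transpose_transpose]
    have : Gᵀ * (Xᵀ * (Y * G)) = Gᵀ * Yᵀ * X * G := by
      rw [← Matrix.mul_assoc Xᵀ, hXY]
      simp only [Matrix.mul_assoc]
    rw [this, add_comm (Gᵀ * Yᵀ)]
  · have : Gᵀ * Yᵀ * X * G * X = Gᵀ * Yᵀ * X := by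
      rw [Matrix.mul_assoc _ X, Matrix.mul_assoc _ (X * G), hG]
    rw [Matrix.sub_mul, Matrix.add_mul, this, hY, add_sub_cancel_right]

/-- Every isotropic matrix can be moved into the Lagrangian of vectors with zero bottom half. -/
lemma exists_normalForm (X Y : Matrix (Fin l) (Fin l) k) (hXY : Xᵀ * Y = Yᵀ * X) :
    ∃ g ∈ symplecticGroup (Fin l) k, ∃ Z : Matrix (Fin l) (Fin l) k,
      g * fromRows X Y = fromRows Z 0 := by
  obtain ⟨T, hT, hker⟩ := exists_shear X Y hXY
  have hXY' : (X + T * Y)ᵀ * Y = Yᵀ * (X + T * Y) := by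
    simp [Matrix.add_mul, Matrix.mul_add, hT, hXY, Matrix.mul_assoc]
  obtain ⟨S, hS, hSX⟩ := exists_symm_mul_eq (X + T * Y) Y hXY' hker
  have h1 : fromBlocks 1 T 0 1 ∈ symplecticGroup (Fin l) k := by
    simp [SymplecticGroup.fromBlocks_mem_iff, hT]
  have h2 : fromBlocks 1 0 (-S) 1 ∈ symplecticGroup (Fin l) k := by
    simp [SymplecticGroup.fromBlocks_mem_iff, hS]
  refine ⟨_, mul_mem h2 h1, X + T * Y, ?_⟩
  rw [Matrix.mul_assoc, fromBlocks_mul_fromRows, fromBlocks_mul_fromRows]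
  simp [hSX]

lemma exists_isUnit_mul_eq (X Y : Matrix (Fin l) (Fin l) k)
    (h : LinearMap.ker X.mulVecLin = LinearMap.ker Y.mulVecLin) :
    ∃ g : Matrix (Fin l) (Fin l) k, IsUnit g ∧ g * X = Y := by
  obtain ⟨φ, hφ⟩ := Submodule.exists_linearEquiv_restrict_eq
    (X.mulVecLin.quotKerEquivRange.symm.trans
      ((Submodule.quotEquivOfEq _ _ h).trans Y.mulVecLin.quotKerEquivRange))
  have key : ∀ v, φ (X *ᵥ v) = Y *ᵥ v := by
    intro v
    have := hφ (X.mulVecLin.quotKerEquivRange (Submodule.Quotient.mk v))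
    simpa using this.symm
  refine ⟨LinearMap.toMatrix' φ.toLinearMap, ?_, ?_⟩
  · rw [isUnit_iff_isUnit_det]
    simpa using φ.isUnit_det'
  · refine ext_of_mulVec_single fun i => ?_
    rw [← mulVec_mulVec, ← key]
    exact LinearMap.toMatrix'_mulVec _ _

lemma stdJ_eq : stdJ k l = -J (Fin l) k := by
  simp [stdJ, J, fromBlocks_neg]

lemma mem_iff_stdJ {g : Matrix (Fin l ⊕ Fin l) (Fin l ⊕ Fin l) k} :
    g ∈ symplecticGroup (Fin l) k ↔ gᵀ * stdJ k l * g = stdJ k l := by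
  rw [SymplecticGroup.mem_iff', stdJ_eq]
  simp

lemma ker_mul_left {g : Matrix (Fin l ⊕ Fin l) (Fin l ⊕ Fin l) k}
    (hg : g ∈ symplecticGroup (Fin l) k) (A : Matrix (Fin l ⊕ Fin l) (Fin l) k) :
    LinearMap.ker (g * A).mulVecLin = LinearMap.ker A.mulVecLin := by
  have hu : IsUnit g := (isUnit_iff_isUnit_det _).2 (SymplecticGroup.symplectic_det hg)
  ext v
  simp only [LinearMap.mem_ker, mulVecLin_apply, ← mulVec_mulVec]
  exact ⟨fun h => mulVec_injective_of_isUnit hu (by simpa using h), fun h => by simp [h]⟩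

lemma ker_fromRows_zero (Z : Matrix (Fin l) (Fin l) k) :
    LinearMap.ker (fromRows Z (0 : Matrix (Fin l) (Fin l) k)).mulVecLin =
      LinearMap.ker Z.mulVecLin := by
  ext v
  simp [funext_iff, fromRows_mulVec]

/-- `exists_normalForm` for an unsplit matrix. -/
lemma exists_normalForm' (A : Matrix (Fin l ⊕ Fin l) (Fin l) k) (hA : Aᵀ * stdJ k l * A = 0) :
    ∃ g ∈ symplecticGroup (Fin l) k, ∃ Z : Matrix (Fin l) (Fin l) k,
      g * A = fromRows Z 0 := by
  rw [← fromRows_toRows A] at hA ⊢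
  apply exists_normalForm
  rw [stdJ, Matrix.mul_assoc, fromBlocks_mul_fromRows, transpose_fromRows,
    fromCols_mul_fromRows] at hA
  simp only [Matrix.zero_mul, Matrix.one_mul, Matrix.neg_mul, Matrix.mul_neg, zero_add,
    add_zero, ← sub_eq_add_neg] at hA
  exact sub_eq_zero.1 hA

end SymplecticOrbit

open SymplecticOrbit

/-- Two `2l × l` matrices with isotropic image over a field of characteristic 0 lie
in the same `Sp(2l,k)`-orbit for left multiplication if and only if they have the
same kernel. -/
theorem stmt_9 (k : Type*) [Field k] [CharZero k] (l : ℕ) (hl : 1 ≤ l)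
    (A B : Matrix (Fin l ⊕ Fin l) (Fin l) k)
    (hA : Aᵀ * stdJ k l * A = 0) (hB : Bᵀ * stdJ k l * B = 0) :
    (∃ g : Matrix (Fin l ⊕ Fin l) (Fin l ⊕ Fin l) k,
        gᵀ * stdJ k l * g = stdJ k l ∧ g * A = B)
      ↔ LinearMap.ker A.mulVecLin = LinearMap.ker B.mulVecLin := by
  constructor
  · rintro ⟨g, hg, rfl⟩
    exact (ker_mul_left (mem_iff_stdJ.2 hg) A).symm
  · intro hker
    obtain ⟨g₁, hg₁, Z₁, h₁⟩ := exists_normalForm' A hA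
    obtain ⟨g₂, hg₂, Z₂, h₂⟩ := exists_normalForm' B hB
    rw [← ker_mul_left hg₁ A, ← ker_mul_left hg₂ B, h₁, h₂, ker_fromRows_zero,
      ker_fromRows_zero] at hker
    obtain ⟨h, hu, hZ⟩ := exists_isUnit_mul_eq Z₁ Z₂ hker
    rw [isUnit_iff_isUnit_det] at hu
    have hm : fromBlocks h 0 0 (h⁻¹)ᵀ ∈ symplecticGroup (Fin l) k := by
      simp [SymplecticGroup.fromBlocks_mem_iff, ← transpose_mul, nonsing_inv_mul _ hu]
    have hinv : ((⟨g₂, hg₂⟩⁻¹ : symplecticGroup (Fin l) k) :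
        Matrix (Fin l ⊕ Fin l) (Fin l ⊕ Fin l) k) * g₂ = 1 :=
      congrArg Subtype.val (inv_mul_cancel (⟨g₂, hg₂⟩ : symplecticGroup (Fin l) k))
    refine ⟨_, mem_iff_stdJ.1 (mul_mem (⟨g₂, hg₂⟩⁻¹ : symplecticGroup (Fin l) k).2
      (mul_mem hm hg₁)), ?_⟩
    have h₃ : fromBlocks h 0 0 (h⁻¹)ᵀ * (g₁ * A) = g₂ * B := by
      rw [h₁, h₂, fromBlocks_mul_fromRows]
      simp [hZ]
    rw [Matrix.mul_assoc, Matrix.mul_assoc, h₃, ← Matrix.mul_assoc, hinv, Matrix.one_mul]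
end

section
/- Let k be a field of characteristic 0, let V₁, V₂, V₃ be nonzero finite-dimensional k-vector spaces, let R be a nonzero k-vector space, and let φ₁ : R → Hom(V₂,V₁), φ₂ : R → Hom(V₃,V₁), φ₃ : R → Hom(V₃,V₂) be injective linear maps. Let W = {(φ₁(r), φ₂(r), φ₃(r)) : r ∈ R} ⊆ Hom(V₂,V₁) ⊕ Hom(V₃,V₁) ⊕ Hom(V₃,V₂) be the diagonal image. Suppose x₁, x₂, x₃ ∈ k satisfy x₁·dim V₁ + x₂·dim V₂ + x₃·dim V₃ = 0, and that the linear endomorphism (f, g, h) ↦ ((x₁−x₂)f, (x₁−x₃)g, (x₂−x₃)h) maps W into W. Then x₁ = x₂ = x₃ = 0. -/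
/-!
Stability of the diagonal `W` forces the three scalars `x₁ - x₂`, `x₁ - x₃`, `x₂ - x₃` to agree,
because each `φᵢ` is injective and `R ≠ 0`. Equality of the first two gives `x₂ = x₃`, so the
common value is `0` and `x₁ = x₂ = x₃`. The trace condition then kills this common scalar, since
the total dimension is nonzero in characteristic zero.
-/

/-- Linear-algebra core of Losev's example: if the scalars `x₁, x₂, x₃` satisfy the
trace condition `x₁·dim V₁ + x₂·dim V₂ + x₃·dim V₃ = 0` and the operator acting on
the three off-diagonal blocks by `x₁−x₂`, `x₁−x₃`, `x₂−x₃` preserves the diagonally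
embedded copy `W` of `R`, then `x₁ = x₂ = x₃ = 0`. -/
theorem stmt_12 (k : Type*) [Field k] [CharZero k]
    (V₁ V₂ V₃ R : Type*)
    [AddCommGroup V₁] [Module k V₁] [FiniteDimensional k V₁]
    [AddCommGroup V₂] [Module k V₂] [FiniteDimensional k V₂]
    [AddCommGroup V₃] [Module k V₃] [FiniteDimensional k V₃]
    [AddCommGroup R] [Module k R]
    (hV₁ : Nontrivial V₁) (hV₂ : Nontrivial V₂) (hV₃ : Nontrivial V₃)
    (hR : Nontrivial R)
    (φ₁ : R →ₗ[k] (V₂ →ₗ[k] V₁)) (φ₂ : R →ₗ[k] (V₃ →ₗ[k] V₁))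
    (φ₃ : R →ₗ[k] (V₃ →ₗ[k] V₂))
    (h₁ : Function.Injective φ₁) (h₂ : Function.Injective φ₂)
    (h₃ : Function.Injective φ₃)
    (x₁ x₂ x₃ : k)
    (htrace : x₁ * (Module.finrank k V₁ : k) + x₂ * (Module.finrank k V₂ : k)
        + x₃ * (Module.finrank k V₃ : k) = 0)
    (hstab : ∀ r : R, ∃ r' : R,
        (x₁ - x₂) • φ₁ r = φ₁ r' ∧ (x₁ - x₃) • φ₂ r = φ₂ r' ∧
        (x₂ - x₃) • φ₃ r = φ₃ r') :
    x₁ = 0 ∧ x₂ = 0 ∧ x₃ = 0 := by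
  obtain ⟨r, hr⟩ := exists_ne (0 : R)
  obtain ⟨s, e₁, e₂, e₃⟩ := hstab r
  -- By injectivity of each `φᵢ`, the vector `s` is the multiple of `r` by each of the three
  -- scalars; since `r ≠ 0`, the scalars coincide.
  rw [← map_smul] at e₁ e₂ e₃
  have f₁ := h₁ e₁
  have f₂ := h₂ e₂
  have f₃ := h₃ e₃
  have a : x₁ - x₂ = x₁ - x₃ := smul_left_injective k hr (f₁.trans f₂.symm)
  have b : x₁ - x₃ = x₂ - x₃ := smul_left_injective k hr (f₂.trans f₃.symm)
  obtain rfl : x₂ = x₃ := sub_right_injective a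
  obtain rfl : x₁ = x₂ := sub_left_injective b
  -- The trace condition now reads `x₁ * dim (V₁ ⊕ V₂ ⊕ V₃) = 0`, with nonzero dimension in
  -- characteristic zero.
  have hpos : 0 < Module.finrank k V₁ := Module.finrank_pos
  have hd : ((Module.finrank k V₁ + Module.finrank k V₂ + Module.finrank k V₃ : ℕ) : k) ≠ 0 :=
    Nat.cast_ne_zero.mpr (by omega)
  have hx : x₁ = 0 := by
    refine (mul_eq_zero.mp ?_).resolve_right hd
    push_cast
    linear_combination htrace
  exact ⟨hx, hx, hx⟩
end

section
/- Let r ≥ 1, let Λ ⊆ ℤ^r be a finite set, and let V = ⊕_{λ∈Λ} V_λ be a finite-dimensional complex vector space graded by Λ. For γ ∈ ℤ^r and t ∈ ℂ \ {0}, let γ(t) : V → V be the linear operator acting on V_λ as multiplication by t^{⟨γ,λ⟩}, where ⟨γ,λ⟩ = Σ_{i=1}^r γ_i λ_i. Let x ∈ V, and let γ₁, …, γ_m ∈ ℤ^r satisfy γ₁ + ⋯ + γ_m = 0. If for each j = 1, …, m the limit lim_{t→0} γ_j(t)x exists in V, then γ_j(t)x = x for all j and all t ∈ ℂ \ {0};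 that is, x is fixed by each of the one-parameter subgroups γ_j. -/
/-!
On a weight component where `x` is nonzero, existence of `lim_{t → 0} t ^ ⟨γ_j, λ⟩ x_λ` forces
`⟨γ_j, λ⟩ ≥ 0`, since a negative power of `t` is unbounded near `0`. As `∑ j, ⟨γ_j, λ⟩ = 0`, these
nonnegative integers all vanish, so every `γ_j(t)` fixes `x_λ`.
-/

/-- The operator `γ(t)` on the `Λ`-graded complex vector space `V = ⊕_{λ∈Λ} V_λ`
(with `V_λ = ℂ^{d(λ)}`), acting on the component of degree `λ` as multiplication by
`t^{⟨γ,λ⟩}` where `⟨γ,λ⟩ = Σᵢ γᵢ λᵢ`. -/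
noncomputable def wtAct {r : ℕ} (Λ : Finset (Fin r → ℤ)) (d : (Fin r → ℤ) → ℕ)
    (γ : Fin r → ℤ) (t : ℂ) (x : ∀ lam : Λ, Fin (d lam) → ℂ) :
    ∀ lam : Λ, Fin (d lam) → ℂ :=
  fun lam i => t ^ (∑ j, γ j * (lam : Fin r → ℤ) j) * x lam i

theorem zpow_exponent_nonneg_of_tendsto {n : ℤ} {c y : ℂ} (hc : c ≠ 0)
    (h : Filter.Tendsto (fun t : ℂ => t ^ n * c) (nhdsWithin 0 {(0 : ℂ)}ᶜ) (nhds y)) :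
    0 ≤ n := by
  by_contra! hn
  have h1 := h.mul_const c⁻¹
  simp only [mul_inv_cancel_right₀ hc] at h1
  exact h1.not_tendsto (Metric.disjoint_nhds_cobounded _)
    (tendsto_zpow_nhdsNE_zero_cobounded hn)

/-- If `γ₁ + ⋯ + γ_m = 0` and for each `j` the limit `lim_{t→0} γ_j(t)x` exists in the
graded vector space `V`, then `x` is fixed by each of the one-parameter subgroups
`γ_j`, i.e. `γ_j(t)x = x` for all `j` and all `t ≠ 0`. -/
theorem stmt_13 (r : ℕ) (hr : 1 ≤ r) (Λ : Finset (Fin r → ℤ)) (d : (Fin r → ℤ) → ℕ)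
    (x : ∀ lam : Λ, Fin (d lam) → ℂ) (m : ℕ) (γs : Fin m → (Fin r → ℤ))
    (hsum : ∑ j, γs j = 0)
    (hlim : ∀ j : Fin m, ∃ y : ∀ lam : Λ, Fin (d lam) → ℂ,
        Filter.Tendsto (fun t : ℂ => wtAct Λ d (γs j) t x)
          (nhdsWithin 0 {(0 : ℂ)}ᶜ) (nhds y)) :
    ∀ j : Fin m, ∀ t : ℂ, t ≠ 0 → wtAct Λ d (γs j) t x = x := by
  intro j t _
  funext lam i
  by_cases hx : x lam i = 0
  · simp [wtAct, hx]
  have hnonneg : ∀ j : Fin m, 0 ≤ ∑ k, γs j k * (lam : Fin r → ℤ) k := by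
    intro j
    obtain ⟨y, hy⟩ := hlim j
    exact zpow_exponent_nonneg_of_tendsto hx (tendsto_pi_nhds.1 (tendsto_pi_nhds.1 hy lam) i)
  have hzero : ∑ j, ∑ k, γs j k * (lam : Fin r → ℤ) k = 0 := by
    rw [Finset.sum_comm]
    refine Finset.sum_eq_zero fun k _ => ?_
    rw [← Finset.sum_mul, ← Finset.sum_apply, hsum, Pi.zero_apply, zero_mul]
  have hj := (Finset.sum_eq_zero_iff_of_nonneg fun j _ => hnonneg j).1 hzero j (Finset.mem_univ j)
  simp [wtAct, hj]
end
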